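/- Let s_1, ..., s_m be positive integers with ∑_{i=1}^m s_i = 3k for a positive integer k, and let G be the split graph constructed as follows: take a complete graph on a vertex set V of size 3k, partition V into sets V_1, ..., V_m with |V_i| = s_i, and add m new pairwise nonadjacent vertices i_1, ..., i_m, joining i_j to all vertices of V_j for each j. Then mmw(G) = k if and only if the multiset {s_1, ..., s_m} can be partitioned into three sub-multisets S_1, S_2, S_3 with equal sums, i.e., ∑_{s∈S_1} s = ∑_{s∈S_2} s = ∑_{s∈S_3} s = k. -/

import Mathlib

/-- `mm G A` is the maximum size (number of edges) of a matching in `G` all of whose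
edges have one endpoint in `A` and the other endpoint in `V(G) \ A`. -/
noncomputable def mm {α : Type} [Fintype α] (G : SimpleGraph α) (A : Set α) : ℕ :=
  sSup {n : ℕ | ∃ M : G.Subgraph, M.IsMatching ∧
    (∀ u v : α, M.Adj u v → (u ∈ A ↔ v ∉ A)) ∧ M.edgeSet.ncard = n}

/-- The maximum matching width `mmw G`: the minimum over all branch-decompositions
`(T, L)` over `V(G)` — `T` a finite ternary tree (all degrees 1 or 3) together with a
bijection `L` between `V(G)` and the leaves of `T` — of the maximum, over the edges of
`T`, of `mm G` applied to the part of the partition of `V(G)` induced by that edge. -/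
noncomputable def mmw {α : Type} [Fintype α] (G : SimpleGraph α) : ℕ :=
  sInf {k : ℕ | ∃ (V : Type) (_ : Fintype V) (T : SimpleGraph V), T.IsTree ∧
    (∀ v : V, (T.neighborSet v).ncard = 1 ∨ (T.neighborSet v).ncard = 3) ∧
    ∃ L : α ≃ {v : V // (T.neighborSet v).ncard = 1},
      ∀ a b : V, T.Adj a b →
        mm G {x : α | (T.deleteEdges {s(a, b)}).Reachable (L x : V) a} ≤ k}

/-!
Given a branch-decomposition of width at most `k`, orient each tree edge towards a side holding
more than `k` of the `3 * k` clique vertices. The clique makes it impossible for both sides to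
qualify, so the tree has a sink, and counting shows that it has degree three and that each of its
three parts holds exactly `k` clique vertices. These `k` vertices are already matched across the
cut around their part, so an edge from some `I j` in the part to a clique vertex outside it would
produce a matching of size `k + 1`. Hence `V j` lies in the part of `I j`, and the three parts
split the blocks into three groups of total size `k`.

Conversely, for a grouping of the blocks into three groups of total size `k`, attach to a common
root one binary tree for each group, with the vertices of the group as leaves. Every tree edge then
cuts off vertices of a single group, and the edges of `G` at these vertices are covered by the `k`
clique vertices of the group.
-/

open SimpleGraph Function

section MatchingAcrossCut

variable {α : Type} [Fintype α] {G : SimpleGraph α} {A C : Set α} {k : ℕ}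

lemma mm_compl (G : SimpleGraph α) (A : Set α) : mm G Aᶜ = mm G A := by
  have cross_compl_iff (u v : α) : (u ∈ Aᶜ ↔ v ∉ Aᶜ) ↔ (u ∈ A ↔ v ∉ A) := by
    simp only [Set.mem_compl_iff]
    tauto
  simp only [mm, cross_compl_iff]

lemma ncard_edgeSet_le_mm {M : G.Subgraph} (hM : M.IsMatching)
    (hcross : ∀ u v, M.Adj u v → (u ∈ A ↔ v ∉ A)) : M.edgeSet.ncard ≤ mm G A := by
  refine le_csSup ⟨(Set.univ : Set (Sym2 α)).ncard, ?_⟩ ⟨M, hM, hcross, rfl⟩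
  rintro _ ⟨M', -, -, rfl⟩
  exact Set.ncard_le_ncard (Set.subset_univ _)

lemma card_le_mm {ι : Type*} [Fintype ι] (f g : ι ↪ α) (hf : ∀ i, f i ∈ A) (hg : ∀ i, g i ∉ A)
    (hadj : ∀ i, G.Adj (f i) (g i)) : Fintype.card ι ≤ mm G A := by
  have f_ne_g (i j : ι) : f i ≠ g j := fun h => hg j (h ▸ hf i)
  have edge_injective : Injective fun i => s(f i, g i) := fun i j hij => by
    rcases Sym2.eq_iff.1 hij with ⟨h, -⟩ | ⟨h, -⟩
    · exact f.injective h
    · exact absurd h (f_ne_g i j)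
  let M : G.Subgraph := ⨆ i, G.subgraphOfAdj (hadj i)
  have isMatching : M.IsMatching := by
    refine Subgraph.IsMatching.iSup (fun i => .subgraphOfAdj (hadj i)) fun i j hij => ?_
    simp [support_subgraphOfAdj, f_ne_g, (f_ne_g _ _).symm, hij.symm]
  have edgeSet_eq : M.edgeSet = Set.range fun i => s(f i, g i) := by
    simp [M, Subgraph.edgeSet_iSup, edgeSet_subgraphOfAdj, Set.iUnion_singleton_eq_range]
  have cross (u v : α) (huv : M.Adj u v) : u ∈ A ↔ v ∉ A := by
    rw [← Subgraph.mem_edgeSet, edgeSet_eq] at huv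
    obtain ⟨i, hi⟩ := huv
    rcases Sym2.eq_iff.1 hi with ⟨rfl, rfl⟩ | ⟨rfl, rfl⟩ <;> simp [hf, hg]
  calc Fintype.card ι = M.edgeSet.ncard := by
        rw [edgeSet_eq, ← Set.image_univ, Set.ncard_image_of_injective _ edge_injective,
          Set.ncard_univ, Nat.card_eq_fintype_card]
    _ ≤ mm G A := ncard_edgeSet_le_mm isMatching cross

lemma mm_le_ncard_of_cover {X : Set α}
    (hX : ∀ u v, G.Adj u v → u ∈ A → v ∉ A → u ∈ X ∨ v ∈ X) : mm G A ≤ X.ncard := by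
  classical
  refine csSup_le' ?_
  rintro _ ⟨M, hM, hcross, rfl⟩
  rw [Set.ncard_eq_toFinset_card', Set.ncard_eq_toFinset_card']
  refine Finset.card_le_card_of_forall_subsingleton (fun e x => x ∈ e) (fun e he => ?_)
    fun x _ => ?_
  · induction e with | _ u v
    have huv : M.Adj u v := by simpa using he
    have := hX u v huv.adj_sub
    have := hX v u huv.adj_sub.symm
    have := hcross u v huv
    simp only [Set.mem_toFinset, Sym2.mem_iff, and_or_left, exists_or, exists_eq_right]
    tauto
  · rintro e ⟨he, hxe⟩ e' ⟨he', hxe'⟩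
    obtain ⟨y, rfl⟩ := hxe
    obtain ⟨z, rfl⟩ := hxe'
    have hxy : M.Adj x y := by simpa using he
    have hxz : M.Adj x z := by simpa using he'
    rw [hM.eq_of_adj_left hxy hxz]

lemma exists_fin_embedding_of_le_ncard {β : Type*} {S : Set β} (hS : k ≤ S.ncard) :
    ∃ f : Fin k ↪ β, ∀ i, f i ∈ S := by
  obtain ⟨t, htS, htk⟩ := Set.exists_subset_card_eq hS
  obtain rfl | hk := Nat.eq_zero_or_pos k
  · exact ⟨.ofIsEmpty, fun i => i.elim0⟩
  have : Finite t := Set.finite_of_ncard_pos (htk ▸ hk)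
  let e : Fin k ≃ t := (Finite.equivFinOfCardEq htk).symm
  exact ⟨e.toEmbedding.trans (.subtype _), fun i => htS (e i).2⟩

lemma le_mm_of_isClique (hC : G.IsClique C) (hin : k ≤ (C ∩ A).ncard)
    (hout : k ≤ (C \ A).ncard) : k ≤ mm G A := by
  obtain ⟨f, hf⟩ := exists_fin_embedding_of_le_ncard hin
  obtain ⟨g, hg⟩ := exists_fin_embedding_of_le_ncard hout
  have hadj (i : Fin k) : G.Adj (f i) (g i) :=
    hC (hf i).1 (hg i).1 fun h => (hg i).2 (h ▸ (hf i).2)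
  simpa using card_le_mm f g (fun i => (hf i).2) (fun i => (hg i).2) hadj

-- An edge from `p` to some `v ∉ A` would extend a matching of `C ∩ A` into `C \ (A ∪ {v})`.
lemma neighborSet_subset_of_mm_le (hC : G.IsClique C) (hin : k ≤ (C ∩ A).ncard)
    (hout : k < (C \ A).ncard) (hmm : mm G A ≤ k) {p : α} (hpA : p ∈ A) (hpC : p ∉ C) :
    G.neighborSet p ⊆ A := by
  intro v hpv
  by_contra hvA
  have hout' : k ≤ ((C \ A) \ {v}).ncard := by
    have := Set.pred_ncard_le_ncard_sdiff_singleton (C \ A) v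
    omega
  obtain ⟨f, hf⟩ := exists_fin_embedding_of_le_ncard hin
  obtain ⟨g, hg⟩ := exists_fin_embedding_of_le_ncard hout'
  have hp : p ∉ Set.range f := by rintro ⟨i, rfl⟩; exact hpC (hf i).1
  have hv : v ∉ Set.range g := by rintro ⟨i, rfl⟩; exact (hg i).2 rfl
  have hadj (i : Fin k) : G.Adj (f i) (g i) :=
    hC (hf i).1 (hg i).1.1 fun h => (hg i).1.2 (h ▸ (hf i).2)
  have := card_le_mm (f.optionElim p hp) (g.optionElim v hv)
    (Option.forall.2 ⟨hpA, fun i => (hf i).2⟩) (Option.forall.2 ⟨hvA, fun i => (hg i).1.2⟩)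
    (Option.forall.2 ⟨hpv, hadj⟩)
  simp only [Fintype.card_option, Fintype.card_fin] at this
  omega

end MatchingAcrossCut

section EdgeSides

variable {V : Type*} {T : SimpleGraph V} {a b : V}

/-- The component of `a` after deleting the edge `ab` of `T`; for a tree, this is one of the two
sides of `ab`, and `edgeSide T b a` is the other. -/
def edgeSide (T : SimpleGraph V) (a b : V) : Set V :=
  {x | (T.deleteEdges {s(a, b)}).Reachable x a}

lemma mem_edgeSide_iff_notMem_support (hT : T.IsAcyclic) (hab : T.Adj a b) {x : V}
    {p : T.Walk x a} (hp : p.IsPath) : x ∈ edgeSide T a b ↔ b ∉ p.support := by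
  classical
  refine ⟨fun hx hb => ?_, fun hb => ?_⟩
  · have ha : a ∉ (p.takeUntil b hb).support :=
      Walk.endpoint_notMem_support_takeUntil hp hb hab.ne
    have hxb : (T.deleteEdges {s(a, b)}).Reachable x b :=
      reachable_deleteEdges_iff_exists_walk.2
        ⟨p.takeUntil b hb, fun h => ha (Walk.fst_mem_support_of_mem_edges _ h)⟩
    exact isAcyclic_iff_forall_adj_isBridge.1 hT hab (hx.symm.trans hxb)
  · exact reachable_deleteEdges_iff_exists_walk.2
      ⟨p, fun h => hb (Walk.snd_mem_support_of_mem_edges _ h)⟩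

lemma edgeSide_swap (hT : T.IsTree) (hab : T.Adj a b) :
    edgeSide T b a = (edgeSide T a b)ᶜ := by
  ext x
  obtain ⟨p, hp, -⟩ := hT.existsUnique_path x a
  obtain ⟨q, hq, -⟩ := hT.existsUnique_path x b
  rw [Set.mem_compl_iff, mem_edgeSide_iff_notMem_support hT.isAcyclic hab hp,
    mem_edgeSide_iff_notMem_support hT.isAcyclic hab.symm hq, not_not]
  exact ⟨hT.isAcyclic.mem_support_of_ne_mem_support_of_adj_of_isPath hp hq hab,
    hT.isAcyclic.ne_mem_support_of_support_of_adj_of_isPath hp hq hab⟩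

lemma existsUnique_adj_mem_edgeSide (hT : T.IsTree) {x : V} (hx : x ≠ a) :
    ∃! c, T.Adj a c ∧ x ∈ edgeSide T c a := by
  obtain ⟨p, hp, -⟩ := hT.existsUnique_path x a
  have mem_iff {c : V} (hc : T.Adj a c) : x ∈ edgeSide T c a ↔ c ∈ p.support := by
    rw [edgeSide_swap hT hc, Set.mem_compl_iff,
      mem_edgeSide_iff_notMem_support hT.isAcyclic hc hp, not_not]
  have hadj : T.Adj a p.penultimate := (p.adj_penultimate (Walk.not_nil_of_ne hx)).symm
  refine ⟨p.penultimate, ⟨hadj, (mem_iff hadj).2 (p.getVert_mem_support _)⟩, ?_⟩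
  rintro c ⟨hc, hxc⟩
  exact hT.isAcyclic.eq_penultimate_of_adj_end hp hc ((mem_iff hc).1 hxc)

-- Otherwise each vertex picks an incident edge leading out and no edge is picked twice, but a tree
-- has fewer edges than vertices.
lemma exists_sink_of_asymm_on_edges [Finite V] (hT : T.IsTree) (R : V → V → Prop)
    (hR : ∀ a b, T.Adj a b → R a b → ¬ R b a) : ∃ a, ∀ b, T.Adj a b → ¬ R a b := by
  classical
  have := Fintype.ofFinite V
  by_contra! hout
  choose next hadj hnext using hout
  have edge_injective : Injective fun a => s(a, next a) := fun a b hab => by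
    rcases Sym2.eq_iff.1 hab with ⟨h, -⟩ | ⟨h, h'⟩
    · exact h
    · have hba : R b a := h.symm ▸ hnext b
      exact absurd hba (hR a b (h' ▸ hadj a) (h' ▸ hnext a))
  have := Finset.card_le_card_of_injOn (s := Finset.univ) (t := T.edgeFinset) _
    (fun a _ => by simpa using hadj a) edge_injective.injOn
  have := hT.card_edgeFinset
  rw [Finset.card_univ] at *
  omega

end EdgeSides

lemma ncard_eq_sum_ncard_inter_preimage {α κ : Type*} [Finite α] [Fintype κ] (C : Set α)
    (t : α → κ) : C.ncard = ∑ i, (C ∩ t ⁻¹' {i}).ncard := by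
  rw [← finsum_eq_sum_of_fintype, ← Set.ncard_iUnion_of_finite (fun _ => Set.toFinite _)]
  · congr 1
    ext x
    simp
  · exact fun i j hij =>
      (((Set.disjoint_singleton.2 hij).preimage t).inter_left' _).inter_right' _

/-- A branch-decomposition over `α`: a finite tree all of whose vertices have degree `1` or `3`,
with a bijection from `α` to its leaves. -/
structure BranchDecomposition (α : Type) where
  Node : Type
  [fintypeNode : Fintype Node]
  tree : SimpleGraph Node
  isTree : tree.IsTree
  ncard_neighborSet : ∀ v, (tree.neighborSet v).ncard = 1 ∨ (tree.neighborSet v).ncard = 3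
  leaf : α ≃ {v : Node // (tree.neighborSet v).ncard = 1}

namespace BranchDecomposition

attribute [instance] fintypeNode

section Parts

variable {α : Type} (D : BranchDecomposition α) {a b : D.Node}

/-- The elements of `α` on the side of `a` when the tree edge `ab` is deleted. -/
def part (a b : D.Node) : Set α :=
  {x | (D.leaf x : D.Node) ∈ edgeSide D.tree a b}

lemma part_swap (hab : D.tree.Adj a b) : D.part b a = (D.part a b)ᶜ := by
  simp only [part, edgeSide_swap D.isTree hab, Set.mem_compl_iff]
  rfl

lemma existsUnique_adj_mem_part {x : α} (hx : (D.leaf x : D.Node) ≠ a) :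
    ∃! c, D.tree.Adj a c ∧ x ∈ D.part c a :=
  existsUnique_adj_mem_edgeSide D.isTree hx

lemma exists_coloring_of_ncard_neighborSet_eq_three
    (ha : (D.tree.neighborSet a).ncard = 3) :
    ∃ t : α → Fin 3, ∀ i, ∃ b, D.tree.Adj a b ∧ t ⁻¹' {i} = D.part b a := by
  have leaf_ne (x : α) : (D.leaf x : D.Node) ≠ a := fun h => by
    have := (D.leaf x).2
    rw [h] at this
    omega
  let e : D.tree.neighborSet a ≃ Fin 3 := Finite.equivFinOfCardEq ha
  choose branch hbranch hunique using fun x => D.existsUnique_adj_mem_part (leaf_ne x)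
  refine ⟨fun x => e ⟨branch x, (hbranch x).1⟩, fun i => ⟨e.symm i, (e.symm i).2, ?_⟩⟩
  ext x
  rw [Set.mem_preimage, Set.mem_singleton_iff, ← e.eq_symm_apply, Subtype.ext_iff]
  exact ⟨fun h => h ▸ (hbranch x).2, fun h => (hunique x _ ⟨(e.symm i).2, h⟩).symm⟩

variable {D}

-- A leaf cannot be a sink: the part beyond its only neighbour misses at most one vertex of `C`.
lemma ncard_neighborSet_eq_three_of_forall_ncard_inter_part_le [Finite α] {C : Set α}
    {k : ℕ} (hC : k + 1 < C.ncard) (ha : ∀ b, D.tree.Adj a b → (C ∩ D.part b a).ncard ≤ k) :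
    (D.tree.neighborSet a).ncard = 3 := by
  refine (D.ncard_neighborSet a).resolve_left fun hleaf => ?_
  obtain ⟨x, hx⟩ := D.leaf.surjective ⟨a, hleaf⟩
  obtain ⟨b, hb⟩ := Set.ncard_eq_one.1 hleaf
  have adj_iff (c : D.Node) : D.tree.Adj a c ↔ c = b := by
    rw [← mem_neighborSet, hb, Set.mem_singleton_iff]
  have subset_part : C \ {x} ⊆ C ∩ D.part b a := by
    rintro y ⟨hyC, hyx⟩
    have hya : (D.leaf y : D.Node) ≠ a := fun h =>
      hyx (D.leaf.injective (Subtype.ext (h.trans (congrArg Subtype.val hx).symm)))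
    obtain ⟨c, ⟨hc, hyc⟩, -⟩ := D.existsUnique_adj_mem_part hya
    exact ⟨hyC, (adj_iff c).1 hc ▸ hyc⟩
  have := Set.ncard_le_ncard subset_part
  have := Set.pred_ncard_le_ncard_sdiff_singleton C x
  have := ha b ((adj_iff b).2 rfl)
  omega

end Parts

section Width

variable {α : Type} [Fintype α] {G : SimpleGraph α} {C : Set α} {k w : ℕ}
  (D : BranchDecomposition α)

/-- The `mm`-width of `D` with respect to `G` is at most `k`. -/
def HasWidthLE (G : SimpleGraph α) (k : ℕ) : Prop :=
  ∀ a b, D.tree.Adj a b → mm G (D.part a b) ≤ k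

variable (G) in
lemma mmw_eq_sInf : mmw G = sInf {k | ∃ D : BranchDecomposition α, D.HasWidthLE G k} := by
  unfold mmw
  congr 1
  ext k
  constructor
  · rintro ⟨N, _, T, hT, hdeg, L, hL⟩
    exact ⟨⟨N, T, hT, hdeg, L⟩, hL⟩
  · rintro ⟨D, hD⟩
    exact ⟨D.Node, D.fintypeNode, D.tree, D.isTree, D.ncard_neighborSet, D.leaf, hD⟩

lemma exists_hasWidthLE_mmw (hG : 0 < mmw G) :
    ∃ D : BranchDecomposition α, D.HasWidthLE G (mmw G) := by
  rw [mmw_eq_sInf] at hG ⊢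
  exact Nat.sInf_mem (Nat.nonempty_of_pos_sInf hG)

variable {D}

lemma exists_forall_ncard_inter_part_le (hC : G.IsClique C) (hD : D.HasWidthLE G k) :
    ∃ a, ∀ b, D.tree.Adj a b → (C ∩ D.part b a).ncard ≤ k := by
  obtain ⟨a, ha⟩ := exists_sink_of_asymm_on_edges D.isTree
    (fun a b => k < (C ∩ D.part b a).ncard) fun a b hab hb ha => by
      rw [D.part_swap hab, ← Set.sdiff_eq] at hb
      exact Nat.not_le.2 (le_mm_of_isClique hC ha hb) (hD a b hab)
  exact ⟨a, fun b hab => not_lt.1 (ha b hab)⟩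

lemma exists_balanced_coloring (hk : 0 < k) (hC : G.IsClique C) (hcard : C.ncard = 3 * k)
    (hD : D.HasWidthLE G k) :
    ∃ t : α → Fin 3, ∀ i, (C ∩ t ⁻¹' {i}).ncard = k ∧
      ∃ a b, D.tree.Adj a b ∧ t ⁻¹' {i} = D.part a b := by
  obtain ⟨a, ha⟩ := exists_forall_ncard_inter_part_le hC hD
  obtain ⟨t, ht⟩ := D.exists_coloring_of_ncard_neighborSet_eq_three
    (ncard_neighborSet_eq_three_of_forall_ncard_inter_part_le (by omega) ha)
  choose b hab hb using ht
  have ncard_le (i : Fin 3) : (C ∩ t ⁻¹' {i}).ncard ≤ k := hb i ▸ ha (b i) (hab i)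
  have sum_eq : ∑ i, (C ∩ t ⁻¹' {i}).ncard = ∑ _ : Fin 3, k := by
    rw [← ncard_eq_sum_ncard_inter_preimage, hcard]
    simp
  have ncard_eq := (Finset.sum_eq_sum_iff_of_le fun i _ => ncard_le i).1 sum_eq
  exact ⟨t, fun i => ⟨ncard_eq i (Finset.mem_univ i), b i, a, (hab i).symm, hb i⟩⟩

lemma le_of_hasWidthLE_of_isClique (hC : G.IsClique C) (hcard : C.ncard = 3 * k)
    (hD : D.HasWidthLE G w) : k ≤ w := by
  by_contra! hwk
  obtain ⟨t, ht⟩ := exists_balanced_coloring (by omega) hC hcard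
    fun a b hab => (hD a b hab).trans hwk.le
  obtain ⟨hin, a, b, hab, hpart⟩ := ht 0
  have := Set.ncard_inter_add_ncard_sdiff_eq_ncard C (t ⁻¹' {0})
  have := le_mm_of_isClique hC hin.ge (by omega)
  have := hD a b hab
  rw [← hpart] at this
  omega

end Width

end BranchDecomposition

section ParentGraph

variable {V : Type*} {par : V → V}

/-- The graph joining each vertex to its parent under `par`. A root is encoded as a fixed point of
`par`. -/
def parentGraph (par : V → V) : SimpleGraph V := .fromRel fun x y => par x = y

lemma parentGraph_adj {x y : V} :
    (parentGraph par).Adj x y ↔ x ≠ y ∧ (par x = y ∨ par y = x) := .rfl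

lemma exists_iterate_eq_of_mem_edgeSide {v x : V} (hx : x ∈ edgeSide (parentGraph par) v (par v)) :
    ∃ n, par^[n] x = v := by
  induction (reachable_iff_reflTransGen _ _).1 hx using Relation.ReflTransGen.head_induction_on with
  | refl => exact ⟨0, rfl⟩
  | @head x y hxy hyv ih =>
    obtain ⟨hadj, hne⟩ := deleteEdges_adj.1 hxy
    obtain ⟨n, hn⟩ := ih ((reachable_iff_reflTransGen _ _).2 hyv)
    obtain hpar | hpar := (parentGraph_adj.1 hadj).2
    · exact ⟨n + 1, by rwa [iterate_succ_apply, hpar]⟩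
    · cases n with
      | zero =>
        obtain rfl : y = v := hn
        exact absurd (by rw [← hpar, Sym2.eq_swap]; rfl) hne
      | succ n => exact ⟨n, by rwa [iterate_succ_apply, hpar] at hn⟩

variable {r : V} {rk : V → ℕ}

lemma rk_iterate_le (hr : par r = r) (hrk : ∀ x ≠ r, rk (par x) < rk x) (n : ℕ) (x : V) :
    rk (par^[n] x) ≤ rk x := by
  induction n with
  | zero => exact le_rfl
  | succ n ih =>
    rw [iterate_succ_apply']
    obtain h | h := eq_or_ne (par^[n] x) r
    · rw [h, hr, ← h]
      exact ih
    · exact (hrk _ h).le.trans ih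

lemma isTree_parentGraph (hr : par r = r) (hrk : ∀ x ≠ r, rk (par x) < rk x) :
    (parentGraph par).IsTree := by
  have par_ne {x : V} (hx : x ≠ r) : x ≠ par x := fun h => (hrk x hx).ne (congrArg rk h.symm)
  have reachable_root (x : V) : (parentGraph par).Reachable x r := by
    induction hn : rk x using Nat.strong_induction_on generalizing x with | _ n ih
    obtain rfl | hx := eq_or_ne x r
    · exact .refl x
    · have hadj : (parentGraph par).Adj x (par x) := ⟨par_ne hx, .inl rfl⟩
      exact hadj.reachable.trans (ih _ (hn ▸ hrk x hx) _ rfl)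
  have isBridge_par {x : V} (hx : x ≠ par x) : (parentGraph par).IsBridge s(x, par x) := by
    refine isBridge_iff.2 fun h => ?_
    obtain ⟨n, hn⟩ := exists_iterate_eq_of_mem_edgeSide (x := par x) h.symm
    have hxr : x ≠ r := fun h => hx (h ▸ hr.symm)
    exact (hn ▸ rk_iterate_le hr hrk n (par x)).not_gt (hrk x hxr)
  have : Nonempty V := ⟨r⟩
  refine ⟨⟨fun x y => (reachable_root x).trans (reachable_root y).symm⟩, ?_⟩
  refine isAcyclic_iff_forall_adj_isBridge.2 fun x y hxy => ?_
  obtain ⟨hne, rfl | rfl⟩ := parentGraph_adj.1 hxy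
  · exact isBridge_par hne
  · rw [Sym2.eq_swap]
    exact isBridge_par hne.symm

lemma ncard_neighborSet_parentGraph [Finite V] (hr : par r = r)
    (hrk : ∀ x ≠ r, rk (par x) < rk x) {x : V} (hx : x ≠ r) :
    ((parentGraph par).neighborSet x).ncard = {y | par y = x}.ncard + 1 := by
  have ne_par : x ≠ par x := fun h => (hrk x hx).ne (congrArg rk h.symm)
  have par_notMem : par x ∉ {y | par y = x} := fun h => by
    have : rk (par (par x)) ≤ rk (par x) := rk_iterate_le hr hrk 1 (par x)
    rw [h] at this
    exact this.not_gt (hrk x hx)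
  have neighborSet_eq : (parentGraph par).neighborSet x = insert (par x) {y | par y = x} := by
    ext y
    simp only [mem_neighborSet, parentGraph_adj, Set.mem_insert_iff, Set.mem_ofPred_eq]
    grind
  rw [neighborSet_eq, Set.ncard_insert_of_notMem par_notMem]

end ParentGraph

section HeapTree

variable {κ : Type*} {N : κ → ℕ}

/-- The nodes of the binary heaps `0, …, 2 * N i`, one for each `i`, and a common root `none`. In
heap indexing the children of `l` are `2 * l + 1` and `2 * l + 2`, so `l` is a leaf iff
`N i ≤ l`. -/
abbrev HeapNode (N : κ → ℕ) := Option (Σ i, Fin (2 * N i + 1))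

/-- The parent of a node; the top `0` of each heap is attached to the common root, which is its own
parent. -/
def heapParent : HeapNode N → HeapNode N
  | none => none
  | some ⟨i, l⟩ => if (l : ℕ) = 0 then none else some ⟨i, ⟨(l - 1) / 2, by omega⟩⟩

/-- The index of a node in its heap shifted by one, so as to decrease along `heapParent` also at the
top of a heap. -/
def heapRank : HeapNode N → ℕ
  | none => 0
  | some ⟨_, l⟩ => l + 1

lemma heapRank_heapParent_lt {x : HeapNode N} (hx : x ≠ none) :
    heapRank (heapParent x) < heapRank x := by
  match x with
  | some ⟨i, l⟩ =>
    by_cases hl : (l : ℕ) = 0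
    · simp [heapParent, heapRank, hl]
    · simp only [heapParent, heapRank, hl, if_false]
      omega

lemma heapParent_eq_none_iff {x : HeapNode N} :
    heapParent x = none ↔ x = none ∨ ∃ i, x = some ⟨i, 0⟩ := by
  match x with
  | none => simp [heapParent]
  | some ⟨i, l⟩ => simp [heapParent]

lemma heapParent_eq_some_iff {x : HeapNode N} {i : κ} {l : Fin (2 * N i + 1)} :
    heapParent x = some ⟨i, l⟩ ↔
      ∃ c : Fin (2 * N i + 1), x = some ⟨i, c⟩ ∧ ((c : ℕ) = 2 * l + 1 ∨ (c : ℕ) = 2 * l + 2) := by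
  constructor
  · match x with
    | none => simp [heapParent]
    | some ⟨j, c⟩ =>
      intro h
      by_cases hc : (c : ℕ) = 0
      · simp [heapParent, hc] at h
      · simp only [heapParent, hc, if_false, Option.some_inj] at h
        cases h
        exact ⟨c, rfl, by dsimp only; omega⟩
  · rintro ⟨c, rfl, hc⟩
    have hc0 : (c : ℕ) ≠ 0 := by omega
    simp only [heapParent, hc0, if_false]
    congr
    omega

/-- The tree formed by the heaps and their common root. -/
def heapTree (N : κ → ℕ) : SimpleGraph (HeapNode N) := parentGraph heapParent

lemma isTree_heapTree : (heapTree N).IsTree :=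
  isTree_parentGraph (r := none) rfl fun _ => heapRank_heapParent_lt

lemma ncard_neighborSet_heapTree_none :
    ((heapTree N).neighborSet none).ncard = Nat.card κ := by
  have neighborSet_eq :
      (heapTree N).neighborSet none = Set.range fun i => some ⟨i, 0⟩ := by
    ext y
    simp only [heapTree, mem_neighborSet, parentGraph_adj, heapParent_eq_none_iff,
      Set.mem_range]
    grind [heapParent]
  have injective : Injective fun i => (some ⟨i, 0⟩ : HeapNode N) := fun i j h =>
    congrArg Sigma.fst (Option.some_inj.1 h)
  rw [neighborSet_eq, ← Set.image_univ, Set.ncard_image_of_injective _ injective, Set.ncard_univ]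

lemma setOf_heapParent_eq_some (i : κ) (l : Fin (2 * N i + 1)) :
    {x : HeapNode N | heapParent x = some ⟨i, l⟩} = (fun c => some ⟨i, c⟩) ''
      {c : Fin (2 * N i + 1) | (c : ℕ) = 2 * l + 1 ∨ (c : ℕ) = 2 * l + 2} := by
  ext x
  simp only [Set.mem_ofPred_eq, heapParent_eq_some_iff, Set.mem_image]
  grind

lemma ncard_setOf_eq_or_eq_succ (n m : ℕ) :
    {c : Fin (2 * n + 1) | (c : ℕ) = 2 * m + 1 ∨ (c : ℕ) = 2 * m + 2}.ncard =
      if n ≤ m then 0 else 2 := by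
  split_ifs with h
  · rw [Set.ncard_eq_zero, Set.eq_empty_iff_forall_notMem]
    rintro c (hc | hc) <;> omega
  · have hset : {c : Fin (2 * n + 1) | (c : ℕ) = 2 * m + 1 ∨ (c : ℕ) = 2 * m + 2} =
        {⟨2 * m + 1, by omega⟩, ⟨2 * m + 2, by omega⟩} := by
      ext c
      simp [Fin.ext_iff]
    rw [hset, Set.ncard_pair (by simp)]

lemma ncard_neighborSet_heapTree_some [Finite κ] (i : κ) (l : Fin (2 * N i + 1)) :
    ((heapTree N).neighborSet (some ⟨i, l⟩)).ncard = if N i ≤ l then 1 else 3 := by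
  have injective : Injective fun c => (some ⟨i, c⟩ : HeapNode N) :=
    (Option.some_injective _).comp sigma_mk_injective
  rw [heapTree, ncard_neighborSet_parentGraph (r := none) rfl
    (fun _ => heapRank_heapParent_lt) (Option.some_ne_none _), setOf_heapParent_eq_some,
    Set.ncard_image_of_injective _ injective, ncard_setOf_eq_or_eq_succ]
  split_ifs <;> rfl

lemma exists_eq_some_of_iterate_heapParent {x : HeapNode N} {n : ℕ} {i : κ}
    {l : Fin (2 * N i + 1)} (hx : heapParent^[n] x = some ⟨i, l⟩) : ∃ c, x = some ⟨i, c⟩ := by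
  induction n generalizing l with
  | zero => exact ⟨l, hx⟩
  | succ n ih =>
    rw [iterate_succ_apply', heapParent_eq_some_iff] at hx
    obtain ⟨c, hc, -⟩ := hx
    exact ih hc

end HeapTree

section HeapDecomposition

variable {N : Fin 3 → ℕ}

/-- The leaves `N i, …, 2 * N i` of the heaps, as nodes of degree one. -/
def heapLeaf (p : Σ i, Fin (N i + 1)) : {v // ((heapTree N).neighborSet v).ncard = 1} :=
  ⟨some ⟨p.1, ⟨N p.1 + p.2, by omega⟩⟩, by simp [ncard_neighborSet_heapTree_some]⟩

lemma heapLeaf_bijective : Bijective (heapLeaf (N := N)) := by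
  constructor
  · rintro ⟨i, j⟩ ⟨i', j'⟩ h
    have h := Option.some_inj.1 (congrArg Subtype.val h)
    obtain rfl : i = i' := congrArg Sigma.fst h
    simpa [Fin.ext_iff] using h
  · rintro ⟨_ | ⟨i, l⟩, hv⟩
    · simp [ncard_neighborSet_heapTree_none] at hv
    · have hl : N i ≤ l := by
        by_contra hl
        simp [ncard_neighborSet_heapTree_some, hl] at hv
      refine ⟨⟨i, ⟨l - N i, by omega⟩⟩, Subtype.ext ?_⟩
      simp [heapLeaf, Nat.add_sub_cancel' hl]

/-- The branch-decomposition of `α` given by the tree `heapTree N`, with leaves labelled by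
`e`. -/
noncomputable def heapDecomposition {α : Type} (e : α ≃ Σ i, Fin (N i + 1)) :
    BranchDecomposition α where
  Node := HeapNode N
  tree := heapTree N
  isTree := isTree_heapTree
  ncard_neighborSet
    | none => .inr (by rw [ncard_neighborSet_heapTree_none, Nat.card_fin])
    | some ⟨i, l⟩ => by
      rw [ncard_neighborSet_heapTree_some]
      exact ite_eq_or_eq ..
  leaf := e.trans (.ofBijective heapLeaf heapLeaf_bijective)

lemma exists_heapDecomposition_part_subset {α : Type} {e : α ≃ Σ i, Fin (N i + 1)}
    {v : HeapNode N} (hv : v ≠ none) :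
    ∃ i, (heapDecomposition e).part v (heapParent v) ⊆ {x | (e x).1 = i} := by
  obtain ⟨⟨i, l⟩, rfl⟩ := Option.ne_none_iff_exists'.1 hv
  refine ⟨i, fun x hx => ?_⟩
  obtain ⟨n, hn⟩ := exists_iterate_eq_of_mem_edgeSide hx
  obtain ⟨c, hc⟩ := exists_eq_some_of_iterate_heapParent hn
  exact congrArg Sigma.fst (Option.some_inj.1 hc)

end HeapDecomposition

namespace BranchDecomposition

lemma exists_part_subset_preimage {α : Type} [Finite α] {cls : α → Fin 3} (hcls : Surjective cls) :
    ∃ D : BranchDecomposition α, ∀ a b, D.tree.Adj a b →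
      ∃ i, D.part a b ⊆ cls ⁻¹' {i} ∨ D.part b a ⊆ cls ⁻¹' {i} := by
  have card_fiber (i : Fin 3) :
      Nat.card {x // cls x = i} = Nat.card {x // cls x = i} - 1 + 1 := by
    obtain ⟨x, hx⟩ := hcls i
    have : Nonempty {x // cls x = i} := ⟨x, hx⟩
    exact (Nat.sub_add_cancel Nat.card_pos).symm
  let e : α ≃ Σ i, Fin (Nat.card {x // cls x = i} - 1 + 1) :=
    (Equiv.sigmaFiberEquiv cls).symm.trans
      (.sigmaCongrRight fun i => Finite.equivFinOfCardEq (card_fiber i))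
  refine ⟨heapDecomposition e, fun a b hab => ?_⟩
  obtain ⟨hne, rfl | rfl⟩ := parentGraph_adj.1 hab
  · obtain ⟨i, hi⟩ := exists_heapDecomposition_part_subset (e := e) (v := a)
      (by rintro rfl; exact hne rfl)
    exact ⟨i, .inl hi⟩
  · obtain ⟨i, hi⟩ := exists_heapDecomposition_part_subset (e := e) (v := b)
      (by rintro rfl; exact hne rfl)
    exact ⟨i, .inr hi⟩

lemma exists_hasWidthLE_of_cover {α : Type} [Fintype α] {G : SimpleGraph α} {k : ℕ}
    {cls : α → Fin 3} (hcls : Surjective cls) (X : Fin 3 → Set α) (hcard : ∀ i, (X i).ncard ≤ k)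
    (hX : ∀ u v, G.Adj u v → u ∈ X (cls u) ∨ v ∈ X (cls u)) :
    ∃ D : BranchDecomposition α, D.HasWidthLE G k := by
  obtain ⟨D, hD⟩ := exists_part_subset_preimage hcls
  have mm_le {A : Set α} {i : Fin 3} (hA : A ⊆ cls ⁻¹' {i}) : mm G A ≤ k :=
    (mm_le_ncard_of_cover fun u v huv hu _ => hA hu ▸ hX u v huv).trans (hcard i)
  refine ⟨D, fun a b hab => ?_⟩
  obtain ⟨i, h | h⟩ := hD a b hab
  · exact mm_le h
  · rw [← mm_compl, ← D.part_swap hab]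
    exact mm_le h

end BranchDecomposition

section MultisetColoring

variable {ι : Type*}

lemma exists_coloring_of_sum_eq_map {κ β : Type*} [Fintype κ] [DecidableEq κ] [Nonempty κ]
    (s : ι → β) {J : Finset ι} {S : κ → Multiset β} (hS : ∑ i, S i = J.val.map s) :
    ∃ c : ι → κ, ∀ i, (J.filter (c · = i)).val.map s = S i := by
  classical
  induction J using Finset.induction_on generalizing S with
  | empty =>
    refine ⟨fun _ => Classical.arbitrary κ, fun i => ?_⟩
    have hi : S i = 0 := by
      have := Finset.single_le_sum (f := S) (fun _ _ => Multiset.zero_le _) (Finset.mem_univ i)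
      simpa [hS] using this
    simp [hi]
  | insert a J ha ih =>
    have hmap : ∑ i, S i = s a ::ₘ J.val.map s := by
      rw [hS, Finset.insert_val_of_notMem ha, Multiset.map_cons]
    obtain ⟨i₀, -, hi₀⟩ := Multiset.mem_sum.1 (hmap ▸ Multiset.mem_cons_self (s a) _)
    obtain ⟨R, hR⟩ := Multiset.exists_cons_of_mem hi₀
    have hR_sum : ∑ i, update S i₀ R i = J.val.map s := by
      rw [← Multiset.cons_inj_right (s a), ← hmap, Finset.sum_update_of_mem (Finset.mem_univ i₀),
        ← Multiset.cons_add, ← hR, ← Finset.sum_update_of_mem (Finset.mem_univ i₀), update_eq_self]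
    obtain ⟨c, hc⟩ := ih hR_sum
    have filter_update (i : κ) : J.filter (update c a i₀ · = i) = J.filter (c · = i) :=
      Finset.filter_congr fun j hj => by rw [update_of_ne (ne_of_mem_of_not_mem hj ha)]
    refine ⟨update c a i₀, fun i => ?_⟩
    rw [Finset.filter_insert, update_self, filter_update]
    obtain rfl | hi := eq_or_ne i₀ i
    · rw [if_pos rfl, Finset.insert_val_of_notMem (by simp [ha]), Multiset.map_cons, hc,
        update_self, hR]
    · rw [if_neg hi, hc, update_of_ne hi.symm]

lemma exists_three_multisets_iff_exists_coloring [Fintype ι] (s : ι → ℕ) (k : ℕ) :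
    (∃ S₁ S₂ S₃ : Multiset ℕ, S₁ + S₂ + S₃ = Finset.univ.val.map s ∧
      S₁.sum = k ∧ S₂.sum = k ∧ S₃.sum = k) ↔
    ∃ c : ι → Fin 3, ∀ i, ∑ j with c j = i, s j = k := by
  constructor
  · rintro ⟨S₁, S₂, S₃, hS, h₁, h₂, h₃⟩
    obtain ⟨c, hc⟩ := exists_coloring_of_sum_eq_map s (S := ![S₁, S₂, S₃])
      (by rw [← hS, Fin.sum_univ_three]; rfl)
    refine ⟨c, fun i => ?_⟩
    rw [Finset.sum, hc]
    fin_cases i <;> assumption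
  · rintro ⟨c, hc⟩
    refine ⟨_, _, _, ?_, hc 0, hc 1, hc 2⟩
    have sum_singleton (J : Finset ι) : ∑ j ∈ J, ({s j} : Multiset ℕ) = J.val.map s := by
      rw [← Multiset.sum_map_singleton (J.val.map s), Multiset.map_map]
      rfl
    have := Finset.sum_fiberwise Finset.univ c fun j => ({s j} : Multiset ℕ)
    simpa only [Fin.sum_univ_three, sum_singleton] using this

end MultisetColoring

/-- `G` is the split graph with clique `⋃ j, V j` and independent set `Set.range I`, in which `I j`
is adjacent to exactly the vertices of the block `V j`. -/
structure IsBlockSplitGraph {α ι : Type*} (G : SimpleGraph α) (V : ι → Set α) (I : ι → α) :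
    Prop where
  pairwise_disjoint : Pairwise (Disjoint on V)
  injective : Injective I
  notMem : ∀ i j, I i ∉ V j
  cover : ∀ a, (∃ i, a ∈ V i) ∨ ∃ i, a = I i
  adj_iff : ∀ u v, G.Adj u v ↔
    (u ≠ v ∧ (∃ i, u ∈ V i) ∧ (∃ i, v ∈ V i)) ∨
    (∃ j, u = I j ∧ v ∈ V j) ∨ (∃ j, v = I j ∧ u ∈ V j)

namespace IsBlockSplitGraph

section Blocks

variable {α ι : Type*} {G : SimpleGraph α} {V : ι → Set α} {I : ι → α}

lemma isClique_iUnion (hG : IsBlockSplitGraph G V I) : G.IsClique (⋃ j, V j) :=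
  fun u hu v hv huv => (hG.adj_iff u v).2 (.inl ⟨huv, Set.mem_iUnion.1 hu, Set.mem_iUnion.1 hv⟩)

lemma notMem_iUnion (hG : IsBlockSplitGraph G V I) (i : ι) : I i ∉ ⋃ j, V j := by
  simpa using hG.notMem i

lemma subset_neighborSet (hG : IsBlockSplitGraph G V I) (j : ι) : V j ⊆ G.neighborSet (I j) :=
  fun v hv => (hG.adj_iff (I j) v).2 (.inr (.inl ⟨j, rfl, hv⟩))

lemma exists_block (hG : IsBlockSplitGraph G V I) :
    ∃ β : α → ι, (∀ j, ∀ x ∈ V j, β x = j) ∧ ∀ j, β (I j) = j := by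
  have hex (a : α) : ∃ j, a ∈ V j ∨ a = I j := exists_or.2 (hG.cover a)
  choose β hβ using hex
  refine ⟨β, fun j x hx => ?_, fun j => ?_⟩
  · obtain h | h := hβ x
    · exact hG.pairwise_disjoint.eq (Set.not_disjoint_iff.2 ⟨x, h, hx⟩)
    · exact absurd (h ▸ hx) (hG.notMem _ j)
  · obtain h | h := hβ (I j)
    · exact absurd h (hG.notMem j _)
    · exact (hG.injective h).symm

lemma ncard_biUnion [Finite α] (hG : IsBlockSplitGraph G V I) (J : Finset ι) :
    (⋃ j ∈ J, V j).ncard = ∑ j ∈ J, (V j).ncard := by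
  rw [← finsum_mem_coe_finset]
  exact J.finite_toSet.ncard_biUnion (fun j _ => Set.toFinite _)
    (hG.pairwise_disjoint.set_pairwise _)

lemma ncard_iUnion [Finite α] [Fintype ι] (hG : IsBlockSplitGraph G V I) :
    (⋃ j, V j).ncard = ∑ j, (V j).ncard := by
  simpa using hG.ncard_biUnion Finset.univ

end Blocks

variable {α : Type} {ι : Type*} [Fintype α] [Fintype ι] {G : SimpleGraph α} {V : ι → Set α}
  {I : ι → α} {k : ℕ}

open BranchDecomposition

lemma exists_coloring_of_hasWidthLE (hG : IsBlockSplitGraph G V I) (hk : 0 < k)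
    (hsum : ∑ j, (V j).ncard = 3 * k) {D : BranchDecomposition α} (hD : D.HasWidthLE G k) :
    ∃ c : ι → Fin 3, ∀ i, ∑ j with c j = i, (V j).ncard = k := by
  have hcard : (⋃ j, V j).ncard = 3 * k := hG.ncard_iUnion.trans hsum
  obtain ⟨t, ht⟩ := exists_balanced_coloring hk hG.isClique_iUnion hcard hD
  have block_subset (j : ι) : V j ⊆ t ⁻¹' {t (I j)} := by
    obtain ⟨hin, a, b, hab, hpart⟩ := ht (t (I j))
    have := Set.ncard_inter_add_ncard_sdiff_eq_ncard (⋃ j, V j) (t ⁻¹' {t (I j)})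
    exact (hG.subset_neighborSet j).trans <|
      neighborSet_subset_of_mm_le hG.isClique_iUnion hin.ge (by omega) (hpart ▸ hD a b hab) rfl
        (hG.notMem_iUnion j)
  refine ⟨fun j => t (I j), fun i => ?_⟩
  rw [← (ht i).1, ← hG.ncard_biUnion]
  congr 1
  ext x
  have color_eq {j : ι} (hx : x ∈ V j) : t x = t (I j) := block_subset j hx
  simp only [Set.mem_iUnion, Finset.mem_filter_univ, Set.mem_inter_iff, Set.mem_preimage,
    Set.mem_singleton_iff]
  grind

lemma exists_hasWidthLE_of_coloring (hG : IsBlockSplitGraph G V I) (hk : 0 < k) {c : ι → Fin 3}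
    (hc : ∀ i, ∑ j with c j = i, (V j).ncard = k) :
    ∃ D : BranchDecomposition α, D.HasWidthLE G k := by
  obtain ⟨β, hβV, hβI⟩ := hG.exists_block
  let X (i : Fin 3) : Set α := ⋃ j ∈ Finset.univ.filter (c · = i), V j
  have ncard_X (i : Fin 3) : (X i).ncard = k := (hG.ncard_biUnion _).trans (hc i)
  have mem_X {j : ι} {x : α} (hx : x ∈ V j) : x ∈ X (c j) := by
    simp only [X, Set.mem_iUnion]
    exact ⟨j, by simp, hx⟩
  have cls_surjective : Surjective fun x => c (β x) := fun i => by
    obtain ⟨x, hx⟩ := Set.nonempty_of_ncard_ne_zero ((ncard_X i).trans_ne hk.ne')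
    simp only [X, Set.mem_iUnion, Finset.mem_filter_univ] at hx
    obtain ⟨j, rfl, hj⟩ := hx
    exact ⟨x, congrArg c (hβV j x hj)⟩
  refine exists_hasWidthLE_of_cover cls_surjective X (fun i => (ncard_X i).le) fun u v huv => ?_
  obtain ⟨-, ⟨j, hj⟩, -⟩ | ⟨j, rfl, hj⟩ | ⟨j, -, hj⟩ := (hG.adj_iff u v).1 huv
  · exact .inl (hβV j u hj ▸ mem_X hj)
  · exact .inr ((hβI j).symm ▸ mem_X hj)
  · exact .inl (hβV j u hj ▸ mem_X hj)

lemma mmw_eq_iff (hG : IsBlockSplitGraph G V I) (hk : 0 < k)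
    (hsum : ∑ j, (V j).ncard = 3 * k) :
    mmw G = k ↔ ∃ c : ι → Fin 3, ∀ i, ∑ j with c j = i, (V j).ncard = k := by
  constructor
  · rintro rfl
    obtain ⟨D, hD⟩ := exists_hasWidthLE_mmw hk
    exact hG.exists_coloring_of_hasWidthLE hk hsum hD
  · rintro ⟨c, hc⟩
    have hex := hG.exists_hasWidthLE_of_coloring hk hc
    rw [mmw_eq_sInf]
    refine le_antisymm (Nat.sInf_le hex) (le_csInf ⟨k, hex⟩ ?_)
    rintro w ⟨D, hD⟩
    exact le_of_hasWidthLE_of_isClique hG.isClique_iUnion (hG.ncard_iUnion.trans hsum) hD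

end IsBlockSplitGraph

/-- Let `s 1, …, s m` be positive integers with `∑ s i = 3k`, `k ≥ 1`, and let `G` be the
split graph constructed as follows: take a complete graph on a vertex set of size `3k`
partitioned into sets `V 1, …, V m` with `|V j| = s j`, and add `m` new pairwise
nonadjacent vertices `I 1, …, I m`, joining `I j` to all vertices of `V j`. Then
`mmw G = k` if and only if the multiset `{s 1, …, s m}` can be partitioned into three
sub-multisets with equal sums (necessarily `k` each). -/
theorem mmw_constructed_split_graph_iff_partition3 {α : Type} [Fintype α]
    (m k : ℕ) (hk : 0 < k)
    (s : Fin m → ℕ) (hspos : ∀ i, 0 < s i) (hsum : ∑ i, s i = 3 * k)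
    (G : SimpleGraph α) (V : Fin m → Set α) (I : Fin m → α)
    (hVcard : ∀ i, (V i).ncard = s i)
    (hVdisj : ∀ i j : Fin m, i ≠ j → Disjoint (V i) (V j))
    (hIinj : Function.Injective I)
    (hIV : ∀ i j, I i ∉ V j)
    (hcover : ∀ a : α, (∃ i, a ∈ V i) ∨ (∃ i, a = I i))
    (hadj : ∀ u v : α, G.Adj u v ↔
      (u ≠ v ∧ (∃ i, u ∈ V i) ∧ (∃ i, v ∈ V i)) ∨
      (∃ j, u = I j ∧ v ∈ V j) ∨ (∃ j, v = I j ∧ u ∈ V j)) :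
    mmw G = k ↔
      ∃ S₁ S₂ S₃ : Multiset ℕ,
        S₁ + S₂ + S₃ = Multiset.map s Finset.univ.val ∧
        S₁.sum = k ∧ S₂.sum = k ∧ S₃.sum = k := by
  have hG : IsBlockSplitGraph G V I := ⟨hVdisj, hIinj, hIV, hcover, hadj⟩
  have hsum' : ∑ i, (V i).ncard = 3 * k := by simpa only [hVcard] using hsum
  rw [hG.mmw_eq_iff hk hsum', exists_three_multisets_iff_exists_coloring]
  simp only [hVcard]
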